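/- Let P and Q be probability measures on a measurable space with P absolutely continuous with respect to Q, let A be a measurable set and λ ≥ 0. Then λ·P(A) ≤ log(1 + (e^λ − 1)·Q(A)) + H(P|Q), where H(P|Q) is the relative entropy of P with respect to Q. -/

import Mathlib

open MeasureTheory
open scoped ENNReal Classical

/-- The relative entropy (Kullback–Leibler divergence) `H(P|Q) = ∫ log(dP/dQ) dP`,
equal to `+∞` if `P` is not absolutely continuous w.r.t. `Q` (or the log-likelihood
ratio is not integrable). -/
noncomputable def relEntropy {Ω : Type*} [MeasurableSpace Ω]
    (P Q : MeasureTheory.Measure Ω) : EReal :=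
  if P ≪ Q ∧ MeasureTheory.Integrable (MeasureTheory.llr P Q) P
  then ((∫ x, MeasureTheory.llr P Q x ∂P : ℝ) : EReal)
  else ⊤

/-!
Let `Q_f` be the measure `Q` tilted by `f`. Then
`log(dP/dQ_f) = log(dP/dQ) - f + log Q(e^f)`, so the Donsker–Varadhan inequality
`P(f) ≤ log Q(e^f) + H(P|Q)` is Gibbs' inequality `0 ≤ H(P|Q_f)`.
For `f = c·1_A` one has `e^f = 1 + (e^c - 1)·1_A`.
-/

section DonskerVaradhan

variable {Ω : Type*} [MeasurableSpace Ω] {P Q : Measure Ω} [IsProbabilityMeasure P] [SigmaFinite Q]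
  {f : Ω → ℝ}

lemma integral_le_log_integral_exp_add_integral_llr (hPQ : P ≪ Q) (hllr : Integrable (llr P Q) P)
    (hfP : Integrable f P) (hfQ : Integrable (fun x ↦ Real.exp (f x)) Q) :
    ∫ x, f x ∂P ≤ Real.log (∫ x, Real.exp (f x) ∂Q) + ∫ x, llr P Q x ∂P := by
  have gibbs : 0 ≤ ∫ x, llr P (Q.tilted f) x ∂P + (Q.tilted f).real Set.univ - P.real Set.univ :=
    InformationTheory.integral_llr_add_sub_measure_univ_nonneg
      (hPQ.trans (absolutelyContinuous_tilted hfQ))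
      (integrable_llr_tilted_right hPQ hfP hllr hfQ)
  have llr_tilted : ∫ x, llr P (Q.tilted f) x ∂P
      = ∫ x, llr P Q x ∂P - ∫ x, f x ∂P + Real.log (∫ x, Real.exp (f x) ∂Q) :=
    integral_llr_tilted_right hPQ hfP hfQ hllr
  have tilted_mass : (Q.tilted f).real Set.univ ≤ 1 := measureReal_le_one
  have P_mass : P.real Set.univ = 1 := probReal_univ
  linarith

lemma integral_le_log_integral_exp_add_relEntropy
    (hfP : Integrable f P) (hfQ : Integrable (fun x ↦ Real.exp (f x)) Q) :
    ((∫ x, f x ∂P : ℝ) : EReal) ≤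
      (Real.log (∫ x, Real.exp (f x) ∂Q) : EReal) + relEntropy P Q := by
  unfold relEntropy
  split_ifs with h
  · exact_mod_cast integral_le_log_integral_exp_add_integral_llr h.1 h.2 hfP hfQ
  · simp only [EReal.coe_add_top, le_top]

end DonskerVaradhan

section ExpIndicator

lemma exp_indicator_const {Ω : Type*} (A : Set Ω) (c : ℝ) (x : Ω) :
    Real.exp (A.indicator (fun _ ↦ c) x) = 1 + A.indicator (fun _ ↦ Real.exp c - 1) x := by
  by_cases hx : x ∈ A <;> simp [hx]

variable {Ω : Type*} [MeasurableSpace Ω] {μ : Measure Ω} [IsFiniteMeasure μ] {A : Set Ω}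

lemma integrable_exp_indicator_const (hA : MeasurableSet A) (c : ℝ) :
    Integrable (fun x ↦ Real.exp (A.indicator (fun _ ↦ c) x)) μ := by
  simp only [exp_indicator_const]
  exact (integrable_const 1).add ((integrable_const _).indicator hA)

lemma integral_exp_indicator_const (hA : MeasurableSet A) (c : ℝ) :
    ∫ x, Real.exp (A.indicator (fun _ ↦ c) x) ∂μ =
      μ.real Set.univ + (Real.exp c - 1) * μ.real A := by
  simp only [exp_indicator_const]
  rw [integral_add (integrable_const 1) ((integrable_const _).indicator hA), integral_const,
    integral_indicator_const _ hA]
  rw [smul_eq_mul, smul_eq_mul, mul_one, mul_comm (μ.real A)]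

end ExpIndicator

theorem stmt_7_general {Ω : Type*} [MeasurableSpace Ω] (P Q : Measure Ω)
    [IsProbabilityMeasure P] [IsProbabilityMeasure Q]
    (A : Set Ω) (hA : MeasurableSet A) (c : ℝ) :
    (c * (P A).toReal : EReal) ≤
      (Real.log (1 + (Real.exp c - 1) * (Q A).toReal) : EReal) + relEntropy P Q := by
  have variational := integral_le_log_integral_exp_add_relEntropy (P := P)
    ((integrable_const c).indicator hA) (integrable_exp_indicator_const (μ := Q) hA c)
  rw [integral_indicator_const c hA, integral_exp_indicator_const hA, probReal_univ, smul_eq_mul,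
    mul_comm, EReal.coe_mul] at variational
  exact variational

/-- Donsker–Varadhan applied to `f = λ·1_A`:
`λ·P(A) ≤ log(1 + (e^λ - 1)·Q(A)) + H(P|Q)`. -/
theorem stmt_7 {Ω : Type*} [MeasurableSpace Ω] (P Q : Measure Ω)
    [IsProbabilityMeasure P] [IsProbabilityMeasure Q] (hPQ : P ≪ Q)
    (A : Set Ω) (hA : MeasurableSet A) (lam : ℝ) (hlam : 0 ≤ lam) :
    (lam * (P A).toReal : EReal) ≤
      (Real.log (1 + (Real.exp lam - 1) * (Q A).toReal) : EReal) + relEntropy P Q :=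
  stmt_7_general P Q A hA lam
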